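/- The group G has exactly 8 conjugacy classes. -/

import Mathlib

open Matrix Complex
open scoped MatrixGroups

noncomputable section

def iM : Matrix (Fin 2) (Fin 2) ℂ := !![0, 1; -1, 0]
def jM : Matrix (Fin 2) (Fin 2) ℂ := !![0, Complex.I; Complex.I, 0]
def kM : Matrix (Fin 2) (Fin 2) ℂ := !![Complex.I, 0; 0, -Complex.I]
def wM : Matrix (Fin 2) (Fin 2) ℂ :=
  (1 / 2 : ℂ) • !![-1 + Complex.I, 1 + Complex.I; -1 + Complex.I, -1 - Complex.I]
def cM : Matrix (Fin 2) (Fin 2) ℂ :=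
  ((Real.sqrt 2 : ℂ))⁻¹ • !![-Complex.I, Complex.I; Complex.I, Complex.I]
def dM : Matrix (Fin 2) (Fin 2) ℂ :=
  ((Real.sqrt 2 : ℂ))⁻¹ • !![-1, 1; 1, 1]

def G : Subgroup (GL (Fin 2) ℂ) :=
  Subgroup.closure {g : GL (Fin 2) ℂ |
    (g : Matrix (Fin 2) (Fin 2) ℂ) = iM ∨
    (g : Matrix (Fin 2) (Fin 2) ℂ) = wM ∨
    (g : Matrix (Fin 2) (Fin 2) ℂ) = dM}

/-- Integral model: 2×2 matrices over `ℤ[√-2]`, stored as eight integers. -/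
structure Q where
  a : ℤ
  b : ℤ
  c : ℤ
  d : ℤ
  e : ℤ
  f : ℤ
  g : ℤ
  h : ℤ
deriving DecidableEq

namespace Q

def mul (x y : Q) : Q where
  a := x.a * y.a - 2 * (x.b * y.b) + (x.c * y.e - 2 * (x.d * y.f))
  b := x.a * y.b + x.b * y.a + (x.c * y.f + x.d * y.e)
  c := x.a * y.c - 2 * (x.b * y.d) + (x.c * y.g - 2 * (x.d * y.h))
  d := x.a * y.d + x.b * y.c + (x.c * y.h + x.d * y.g)
  e := x.e * y.a - 2 * (x.f * y.b) + (x.g * y.e - 2 * (x.h * y.f))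
  f := x.e * y.b + x.f * y.a + (x.g * y.f + x.h * y.e)
  g := x.e * y.c - 2 * (x.f * y.d) + (x.g * y.g - 2 * (x.h * y.h))
  h := x.e * y.d + x.f * y.c + (x.g * y.h + x.h * y.g)

def one : Q := ⟨1, 0, 0, 0, 0, 0, 1, 0⟩
def qi : Q := ⟨1, 1, 0, 1, -2, 0, -1, -1⟩
def qw : Q := ⟨-1, 1, -1, 0, -1, -1, 0, -1⟩
def qd : Q := ⟨1, 0, 1, 1, 0, 0, -1, 0⟩

def prod (S T : List Q) : List Q := S.flatMap fun x => T.map fun y => mul x y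

def qj : Q := mul qw (mul qi (mul qw qw))

/-- All 48 elements. -/
def L : List Q :=
  [⟨1, 0, 0, 0, 0, 0, 1, 0⟩, ⟨1, 0, 1, 1, 0, 0, -1, 0⟩, ⟨-1, 1, -1, 0, -1, -1, 0, -1⟩,
   ⟨-1, 1, -2, 0, -1, -1, 1, -1⟩, ⟨0, -1, 1, 0, 1, 1, -1, 1⟩, ⟨0, -1, 1, -1, 1, 1, 0, 1⟩,
   ⟨-1, 0, 0, -1, 0, -1, 1, 0⟩, ⟨-1, 0, -1, 0, 0, -1, 1, -1⟩, ⟨-1, 0, -1, 0, 1, 0, 0, 0⟩,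
   ⟨-1, 0, 0, -1, 1, 0, 1, 1⟩, ⟨2, 0, 1, 1, -1, 1, -1, 0⟩, ⟨2, 0, 1, 1, -1, 1, -2, 0⟩,
   ⟨1, 1, 0, 1, -2, 0, -1, -1⟩, ⟨1, 1, -1, 1, -2, 0, -1, -1⟩, ⟨-1, -1, 1, -1, 1, 0, 0, 1⟩,
   ⟨-1, -1, 0, -1, 1, 0, 1, 0⟩, ⟨0, 0, -1, 0, 1, 0, 1, 0⟩, ⟨0, 0, 1, 0, 1, 0, 0, 1⟩,
   ⟨1, -1, 2, 0, 0, 1, -1, 1⟩, ⟨1, -1, 1, 0, 0, 1, -1, 0⟩, ⟨-1, 0, -1, -1, 1, -1, 2, 0⟩,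
   ⟨-1, 0, 0, 0, 1, -1, 1, 0⟩, ⟨0, 1, -1, 1, -1, 0, -1, -1⟩, ⟨0, 1, -1, 0, -1, 0, 0, 0⟩,
   ⟨-1, 0, 0, 0, 0, 0, -1, 0⟩, ⟨-1, 0, -1, -1, 0, 0, 1, 0⟩, ⟨1, -1, 1, 0, 1, 1, 0, 1⟩,
   ⟨1, -1, 2, 0, 1, 1, -1, 1⟩, ⟨0, 1, -1, 0, -1, -1, 1, -1⟩, ⟨0, 1, -1, 1, -1, -1, 0, -1⟩,
   ⟨1, 0, 0, 1, 0, 1, -1, 0⟩, ⟨1, 0, 1, 0, 0, 1, -1, 1⟩, ⟨1, 0, 1, 0, -1, 0, 0, 0⟩,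
   ⟨1, 0, 0, 1, -1, 0, -1, -1⟩, ⟨-2, 0, -1, -1, 1, -1, 1, 0⟩, ⟨-2, 0, -1, -1, 1, -1, 2, 0⟩,
   ⟨-1, -1, 0, -1, 2, 0, 1, 1⟩, ⟨-1, -1, 1, -1, 2, 0, 1, 1⟩, ⟨1, 1, -1, 1, -1, 0, 0, -1⟩,
   ⟨1, 1, 0, 1, -1, 0, -1, 0⟩, ⟨0, 0, 1, 0, -1, 0, -1, 0⟩, ⟨0, 0, -1, 0, -1, 0, 0, -1⟩,
   ⟨-1, 1, -2, 0, 0, -1, 1, -1⟩, ⟨-1, 1, -1, 0, 0, -1, 1, 0⟩, ⟨1, 0, 1, 1, -1, 1, -2, 0⟩,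
   ⟨1, 0, 0, 0, -1, 1, -1, 0⟩, ⟨0, -1, 1, -1, 1, 0, 1, 1⟩, ⟨0, -1, 1, 0, 1, 0, 0, 0⟩]

lemma L_eq : L = prod (prod [one, qi, mul qi qi, mul qi (mul qi qi)] [one, qj])
    (prod [one, qw, mul qw qw] [one, qd]) := by decide +kernel

/-- Representatives of the conjugacy classes. -/
def rep : Fin 8 → Q :=
  ![⟨1, 0, 0, 0, 0, 0, 1, 0⟩, ⟨-1, 0, 0, 0, 0, 0, -1, 0⟩, ⟨1, 1, 0, 1, -2, 0, -1, -1⟩, ⟨-1, 1, -1, 0, -1, -1, 0, -1⟩,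
    ⟨1, -1, 1, 0, 1, 1, 0, 1⟩, ⟨1, 0, 1, 1, 0, 0, -1, 0⟩, ⟨-1, -1, 0, -1, 1, 0, 1, 0⟩, ⟨1, 1, 0, 1, -1, 0, -1, 0⟩]

/-- Trace and determinant. -/
def inv (x : Q) : ℤ × ℤ × ℤ × ℤ :=
  (x.a + x.g, x.b + x.h, x.a * x.g - 2 * (x.b * x.h) - (x.c * x.e - 2 * (x.d * x.f)),
    x.a * x.h + x.b * x.g - (x.c * x.f + x.d * x.e))

lemma L_closed : ∀ x ∈ L, mul x qi ∈ L ∧ mul x qw ∈ L ∧ mul x qd ∈ L := by decide +kernel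
lemma one_mem : one ∈ L := by decide +kernel
lemma rep_mem : ∀ r, rep r ∈ L := by decide +kernel
lemma L_conj : ∀ x ∈ L, ∃ r, inv x = inv (rep r) ∧ ∃ h ∈ L, mul h (rep r) = mul x h := by decide +kernel
lemma rep_sep : ∀ r r2, ∀ h ∈ L, mul h (rep r) = mul (rep r2) h → r = r2 := by decide +kernel
lemma gen_inv : mul qi (mul qi (mul qi qi)) = one ∧ mul qw (mul qw qw) = one ∧
    mul qd qd = one := by decide +kernel

end Q

open Q

def tt : ℂ := (Real.sqrt 2 : ℂ)

lemma tt_sq : tt ^ 2 = 2 := by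
  unfold tt
  rw [← Complex.ofReal_pow, Real.sq_sqrt (by norm_num)]
  norm_num

lemma tt_inv : ((Real.sqrt 2 : ℂ))⁻¹ = tt / 2 := by
  have h := tt_sq
  have h0 : tt ≠ 0 := by
    intro h0
    simp [h0] at h
  change tt⁻¹ = tt / 2
  field_simp
  exact h.symm

def PM : Matrix (Fin 2) (Fin 2) ℂ :=
  !![1, tt / 2 * (-1 + I); 1 + tt, (1 + tt / 2) * (1 + I)]

def PI : Matrix (Fin 2) (Fin 2) ℂ :=
  (1 - tt / 2) • !![(1 + tt / 2) * (1 + I), -(tt / 2 * (-1 + I)); -(1 + tt), 1]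

def MM (q : Q) : Matrix (Fin 2) (Fin 2) ℂ :=
  !![q.a + q.b * (I * tt), q.c + q.d * (I * tt); q.e + q.f * (I * tt), q.g + q.h * (I * tt)]

def FF (q : Q) : Matrix (Fin 2) (Fin 2) ℂ := PM * MM q * PI

lemma PM_PI : PM * PI = 1 := by
  have h := tt_sq
  have hI := I_sq
  ext i j
  fin_cases i <;> fin_cases j <;>
    simp [PM, PI, Matrix.mul_apply, Fin.sum_univ_two] <;> grind

lemma PI_PM : PI * PM = 1 := mul_eq_one_comm.mp PM_PI

lemma MM_mul (x y : Q) : MM (mul x y) = MM x * MM y := by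
  have h := tt_sq
  have hI := I_sq
  ext i j
  fin_cases i <;> fin_cases j <;>
    simp [MM, Q.mul, Matrix.mul_apply, Fin.sum_univ_two] <;> grind

lemma FF_mul (x y : Q) : FF (mul x y) = FF x * FF y := by
  unfold FF
  rw [MM_mul]
  calc PM * (MM x * MM y) * PI = PM * MM x * 1 * MM y * PI := by
        simp only [Matrix.mul_one, Matrix.mul_assoc]
    _ = _ := by
        rw [← PI_PM]
        simp only [Matrix.mul_assoc]

lemma FF_one : FF one = 1 := by
  have : MM one = 1 := by
    ext i j
    fin_cases i <;> fin_cases j <;> simp [MM, Q.one]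
  rw [FF, this, Matrix.mul_one, PM_PI]

lemma FF_eq {q : Q} {X : Matrix (Fin 2) (Fin 2) ℂ} (h : PM * MM q = X * PM) : FF q = X := by
  rw [FF, h, Matrix.mul_assoc, PM_PI, Matrix.mul_one]

lemma FF_i : FF qi = iM := by
  apply FF_eq
  have h := tt_sq
  have hI := I_sq
  ext i j
  fin_cases i <;> fin_cases j <;>
    simp [PM, MM, qi, iM, Matrix.mul_apply, Fin.sum_univ_two] <;> grind

lemma FF_w : FF qw = wM := by
  apply FF_eq
  have h := tt_sq
  have hI := I_sq
  ext i j
  fin_cases i <;> fin_cases j <;>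
    simp [PM, MM, qw, wM, Matrix.mul_apply, Fin.sum_univ_two] <;> grind

lemma FF_d : FF qd = dM := by
  apply FF_eq
  have h := tt_sq
  have hI := I_sq
  ext i j
  fin_cases i <;> fin_cases j <;>
    simp [PM, MM, qd, dM, tt_inv, Matrix.mul_apply, Fin.sum_univ_two] <;> grind

lemma entry_inj {a b c d : ℤ} (h : (a : ℂ) + b * (I * tt) = c + d * (I * tt)) :
    a = c ∧ b = d := by
  have h2 : Real.sqrt 2 ≠ 0 := by positivity
  have hr := congrArg Complex.re h
  have hi := congrArg Complex.im h
  simp [tt] at hr hi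
  exact ⟨hr, hi⟩

lemma FF_inj {x y : Q} (h : FF x = FF y) : x = y := by
  have hM : MM x = MM y := by
    have h1 : ∀ q, PI * FF q * PM = MM q := by
      intro q
      unfold FF
      calc PI * (PM * MM q * PI) * PM = (PI * PM) * MM q * (PI * PM) := by
            simp only [Matrix.mul_assoc]
        _ = _ := by rw [PI_PM, Matrix.one_mul, Matrix.mul_one]
    rw [← h1 x, ← h1 y, h]
  have h00 := entry_inj (congrFun (congrFun hM 0) 0)
  have h01 := entry_inj (congrFun (congrFun hM 0) 1)
  have h10 := entry_inj (congrFun (congrFun hM 1) 0)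
  have h11 := entry_inj (congrFun (congrFun hM 1) 1)
  cases x
  cases y
  simp_all

def InG (q : Q) : Prop := ∃ g : GL (Fin 2) ℂ, g ∈ G ∧ (g : Matrix (Fin 2) (Fin 2) ℂ) = FF q

lemma InG.mul {x y : Q} (hx : InG x) (hy : InG y) : InG (Q.mul x y) := by
  obtain ⟨g, hg, hgx⟩ := hx
  obtain ⟨h, hh, hhy⟩ := hy
  exact ⟨g * h, G.mul_mem hg hh, by rw [FF_mul, ← hgx, ← hhy]; rfl⟩

lemma InG_one : InG one := ⟨1, G.one_mem, by rw [FF_one]; rfl⟩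

lemma InG_gen {x y : Q} (hxy : mul x y = one) (hyx : mul y x = one)
    (h : FF x = iM ∨ FF x = wM ∨ FF x = dM) : InG x :=
  ⟨⟨FF x, FF y, by rw [← FF_mul, hxy, FF_one], by rw [← FF_mul, hyx, FF_one]⟩,
    Subgroup.subset_closure h, rfl⟩

lemma InG_i : InG qi :=
  InG_gen (y := mul qi (mul qi qi)) (by decide +kernel) (by decide +kernel) (Or.inl FF_i)
lemma InG_w : InG qw :=
  InG_gen (y := mul qw qw) (by decide +kernel) (by decide +kernel) (Or.inr (Or.inl FF_w))
lemma InG_d : InG qd :=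
  InG_gen (y := qd) (by decide +kernel) (by decide +kernel) (Or.inr (Or.inr FF_d))

lemma InG_prod {S T : List Q} (hS : ∀ x ∈ S, InG x) (hT : ∀ x ∈ T, InG x) :
    ∀ x ∈ prod S T, InG x := by
  intro x hx
  simp only [prod, List.mem_flatMap, List.mem_map] at hx
  obtain ⟨a, ha, b, hb, rfl⟩ := hx
  exact (hS a ha).mul (hT b hb)

lemma InG_L : ∀ x ∈ L, InG x := by
  have hi := InG_i
  have hw := InG_w
  have hd := InG_d
  have h1 := InG_one
  have hj : InG qj := hw.mul (hi.mul (hw.mul hw))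
  rw [L_eq]
  refine InG_prod (InG_prod ?_ ?_) (InG_prod ?_ ?_)
  · simpa using ⟨h1, hi, hi.mul hi, hi.mul (hi.mul hi)⟩
  · simpa using ⟨h1, hj⟩
  · simpa using ⟨h1, hw, hw.mul hw⟩
  · simpa using ⟨h1, hd⟩

lemma exists_L {g : GL (Fin 2) ℂ} (hg : g ∈ G) :
    ∃ q ∈ L, (g : Matrix (Fin 2) (Fin 2) ℂ) = FF q := by
  have gen : ∀ y : GL (Fin 2) ℂ, ((y : Matrix (Fin 2) (Fin 2) ℂ) = iM ∨
      (y : Matrix (Fin 2) (Fin 2) ℂ) = wM ∨ (y : Matrix (Fin 2) (Fin 2) ℂ) = dM) →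
      ∀ x : GL (Fin 2) ℂ, (∃ q ∈ L, (x : Matrix (Fin 2) (Fin 2) ℂ) = FF q) →
      ∃ q ∈ L, ((x * y : GL (Fin 2) ℂ) : Matrix (Fin 2) (Fin 2) ℂ) = FF q := by
    rintro y hy x ⟨q, hq, hx⟩
    obtain ⟨h1, h2, h3⟩ := L_closed q hq
    rcases hy with hy | hy | hy
    · exact ⟨_, h1, by rw [FF_mul, FF_i, ← hx, ← hy]; rfl⟩
    · exact ⟨_, h2, by rw [FF_mul, FF_w, ← hx, ← hy]; rfl⟩
    · exact ⟨_, h3, by rw [FF_mul, FF_d, ← hx, ← hy]; rfl⟩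
  have inv : ∀ y : GL (Fin 2) ℂ, ((y : Matrix (Fin 2) (Fin 2) ℂ) = iM ∨
      (y : Matrix (Fin 2) (Fin 2) ℂ) = wM ∨ (y : Matrix (Fin 2) (Fin 2) ℂ) = dM) →
      y⁻¹ = y * y * y ∨ y⁻¹ = y * y ∨ y⁻¹ = y := by
    obtain ⟨hi, hw, hd⟩ := gen_inv
    intro y hy
    rcases hy with hy | hy | hy
    · left
      rw [inv_eq_iff_mul_eq_one]
      apply Units.ext
      simp only [Units.val_mul, hy, ← FF_i, ← FF_mul, Units.val_one, ← FF_one]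
      rw [← hi]
      rfl
    · right; left
      rw [inv_eq_iff_mul_eq_one]
      apply Units.ext
      simp only [Units.val_mul, hy, ← FF_w, ← FF_mul, Units.val_one, ← FF_one]
      rw [← hw]
    · right; right
      rw [inv_eq_iff_mul_eq_one]
      apply Units.ext
      simp only [Units.val_mul, hy, ← FF_d, ← FF_mul, Units.val_one, ← FF_one]
      rw [← hd]
  refine Subgroup.closure_induction_right
    (p := fun (x : GL (Fin 2) ℂ) _ => ∃ q ∈ L, (x : Matrix (Fin 2) (Fin 2) ℂ) = FF q) ?_ ?_ ?_ hg
  · exact ⟨one, one_mem, by rw [FF_one]; rfl⟩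
  · intro x _ y hy ih
    exact gen y hy x ih
  · intro x _ y hy ih
    rcases inv y hy with h | h | h
    · rw [h, ← mul_assoc, ← mul_assoc]
      exact gen y hy _ (gen y hy _ (gen y hy _ ih))
    · rw [h, ← mul_assoc]
      exact gen y hy _ (gen y hy _ ih)
    · rw [h]
      exact gen y hy _ ih

theorem binary_octahedral_conj_classes : Nat.card (ConjClasses G) = 8 := by
  choose ρ hρG hρ using fun r => InG_L (rep r) (rep_mem r)
  let φ : Fin 8 → ConjClasses G := fun r => ConjClasses.mk ⟨ρ r, hρG r⟩
  have hφ : Function.Bijective φ := by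
    constructor
    · intro r r2 h
      have h1 := ConjClasses.mk_eq_mk_iff_isConj.mp h
      obtain ⟨⟨c, hc⟩, hcc⟩ := isConj_iff.mp h1
      obtain ⟨q, hq, hcq⟩ := exists_L hc
      apply rep_sep r r2 q hq
      apply FF_inj
      rw [FF_mul, FF_mul, ← hρ, ← hρ, ← hcq]
      have h2 : c * ρ r * c⁻¹ = ρ r2 := congrArg Subtype.val hcc
      have h3 : c * ρ r = ρ r2 * c := by rw [← h2]; group
      exact congrArg Units.val h3
    · intro C
      obtain ⟨⟨g, hg⟩, rfl⟩ := ConjClasses.exists_rep C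
      obtain ⟨x, hx, hgx⟩ := exists_L hg
      obtain ⟨r, -, h, hh, heq⟩ := L_conj x hx
      obtain ⟨c, hc, hch⟩ := InG_L h hh
      refine ⟨r, ConjClasses.mk_eq_mk_iff_isConj.mpr (isConj_iff.mpr ⟨⟨c, hc⟩, ?_⟩)⟩
      apply Subtype.ext
      change c * ρ r * c⁻¹ = g
      rw [mul_inv_eq_iff_eq_mul]
      apply Units.ext
      rw [Units.val_mul, Units.val_mul, hρ, hch, hgx, ← FF_mul, ← FF_mul, heq]
  rw [← Nat.card_eq_of_bijective φ hφ]
  simp
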